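/- Let X be a complete, finite-rank median space, x ∈ X, σ an ultrafilter on 𝓗(X), and Ω ⊆ σ \ σ_x a minimal UBS. Then (a) there exists a strongly reduced UBS contained in Ω, and every UBS contained in that UBS is again strongly reduced; and (b) if Ω itself is strongly reduced, then Ω is reduced. -/

import Mathlib

open Metric Filter Set

universe u

/-- The metric interval between `a` and `b`: points lying between `a` and `b`. -/
def mInterval {X : Type u} [MetricSpace X] (a b : X) : Set X :=
  {c : X | dist a c + dist c b = dist a b}

/-- A subset of a metric space is convex if it contains the interval between any
two of its points. -/
def MConvex {X : Type u} [MetricSpace X] (C : Set X) : Prop :=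
  ∀ a ∈ C, ∀ b ∈ C, mInterval a b ⊆ C

/-- `w` is the median of `x, y, z`. -/
def IsMedianPoint {X : Type u} [MetricSpace X] (x y z w : X) : Prop :=
  w ∈ mInterval x y ∧ w ∈ mInterval y z ∧ w ∈ mInterval x z

/-- A median space: every triple of points has a unique median. -/
def IsMedianSpace (X : Type u) [MetricSpace X] : Prop :=
  ∀ x y z : X, ∃! w : X, IsMedianPoint x y z w

/-- A halfspace: a subset such that both it and its complement are convex. -/
def IsHalfspace {X : Type u} [MetricSpace X] (h : Set X) : Prop :=
  MConvex h ∧ MConvex hᶜ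

/-- Two halfspaces are transverse. -/
def Transv {X : Type u} [MetricSpace X] (h k : Set X) : Prop :=
  (h ∩ k).Nonempty ∧ (h ∩ kᶜ).Nonempty ∧ (hᶜ ∩ k).Nonempty ∧ (hᶜ ∩ kᶜ).Nonempty

/-- A wall: an unordered pair `{h, hᶜ}` with `h` a halfspace. -/
def IsWall {X : Type u} [MetricSpace X] (w : Set (Set X)) : Prop :=
  ∃ h : Set X, IsHalfspace h ∧ w = {h, hᶜ}

/-- Two walls are transverse if a side of the first is transverse to a side of the second. -/
def WallTransv {X : Type u} [MetricSpace X] (w₁ w₂ : Set (Set X)) : Prop :=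
  ∃ h ∈ w₁, ∃ k ∈ w₂, Transv h k

/-- `X` has rank at most `r`: every set of pairwise transverse walls has cardinality `≤ r`. -/
def RankLE (X : Type u) [MetricSpace X] (r : ℕ) : Prop :=
  ∀ W : Finset (Set (Set X)), (∀ w ∈ W, IsWall w) →
    (W : Set (Set (Set X))).Pairwise WallTransv → W.card ≤ r

/-- `X` has finite rank. -/
def HasFiniteRank (X : Type u) [MetricSpace X] : Prop :=
  ∃ r : ℕ, RankLE X r

/-- An ultrafilter on the set of halfspaces of `X`: a set of halfspaces, any two
of which intersect, containing exactly one of `h, hᶜ` for every halfspace `h`. -/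
def UltrafilterOn (X : Type u) [MetricSpace X] (σ : Set (Set X)) : Prop :=
  (∀ h ∈ σ, IsHalfspace h) ∧
  (∀ h ∈ σ, ∀ k ∈ σ, (h ∩ k).Nonempty) ∧
  ∀ h : Set X, IsHalfspace h → ((h ∈ σ ∧ hᶜ ∉ σ) ∨ (hᶜ ∈ σ ∧ h ∉ σ))

/-- The principal ultrafilter of halfspaces containing the point `x`. -/
def sigmaPt {X : Type u} [MetricSpace X] (x : X) : Set (Set X) :=
  {h : Set X | IsHalfspace h ∧ x ∈ h}

/-- A diverging chain of halfspaces (with respect to the basepoint `x`):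
a nested sequence of halfspaces whose distance from `x` tends to infinity. -/
def DivChain {X : Type u} [MetricSpace X] (x : X) (c : ℕ → Set X) : Prop :=
  (∀ n, IsHalfspace (c n)) ∧ (∀ n, c (n + 1) ⊆ c n) ∧
    Tendsto (fun n => infDist x (c n)) atTop atTop

/-- A set of halfspaces is inseparable if it contains every halfspace squeezed
between two of its members. -/
def Insep {X : Type u} [MetricSpace X] (Ω : Set (Set X)) : Prop :=
  ∀ j : Set X, IsHalfspace j → ∀ h ∈ Ω, ∀ k ∈ Ω, h ⊆ j → j ⊆ k → j ∈ Ω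

/-- A unidirectional boundary set (UBS) for the ultrafilter `σ`, with basepoint
`x`: an inseparable subset of `σ \ σ_x` containing a diverging chain. -/
def IsUBS {X : Type u} [MetricSpace X] (x : X) (σ Ω : Set (Set X)) : Prop :=
  Ω ⊆ σ \ sigmaPt x ∧ Insep Ω ∧ ∃ c : ℕ → Set X, DivChain x c ∧ ∀ n, c n ∈ Ω

/-- `Ω₁ ≼ Ω₂`: the halfspaces of `Ω₁ \ Ω₂` lie at uniformly bounded distance
from `x` (almost containment of UBS's). -/
def AlmostLE {X : Type u} [MetricSpace X] (x : X) (Ω₁ Ω₂ : Set (Set X)) : Prop :=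
  ∃ M : ℝ, ∀ h ∈ Ω₁ \ Ω₂, infDist x h ≤ M

/-- Equivalence of UBS's. -/
def UBSEquiv {X : Type u} [MetricSpace X] (x : X) (Ω₁ Ω₂ : Set (Set X)) : Prop :=
  AlmostLE x Ω₁ Ω₂ ∧ AlmostLE x Ω₂ Ω₁

/-- A UBS is minimal if every UBS almost contained in it almost contains it. -/
def MinimalUBS {X : Type u} [MetricSpace X] (x : X) (σ Ω : Set (Set X)) : Prop :=
  IsUBS x σ Ω ∧ ∀ Ω₀ : Set (Set X), IsUBS x σ Ω₀ → AlmostLE x Ω₀ Ω → AlmostLE x Ω Ω₀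

/-- A set of halfspaces is reduced if none of its members is transverse to a
diverging chain of halfspaces contained in it. -/
def ReducedUBS {X : Type u} [MetricSpace X] (x : X) (Ω : Set (Set X)) : Prop :=
  ∀ k ∈ Ω, ¬ ∃ c : ℕ → Set X, DivChain x c ∧ (∀ n, c n ∈ Ω) ∧ ∀ n, Transv k (c n)

/-- A set of halfspaces is strongly reduced if it is a finite disjoint union of
subsets, each totally ordered by inclusion and containing a diverging chain. -/
def StronglyReducedUBS {X : Type u} [MetricSpace X] (x : X) (Ω : Set (Set X)) : Prop :=
  ∃ (k : ℕ) (C : Fin k → Set (Set X)), 1 ≤ k ∧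
    (Set.univ : Set (Fin k)).PairwiseDisjoint C ∧
    (⋃ i, C i) = Ω ∧
    ∀ i, IsChain (· ⊆ ·) (C i) ∧ ∃ c : ℕ → Set X, DivChain x c ∧ ∀ n, c n ∈ C i

theorem dilworth_fin {α : Type*} [PartialOrder α] [DecidableEq α] : ∀ (n : ℕ) (s : Finset α), s.card ≤ n →
    ∃ A : Finset α, A ⊆ s ∧ IsAntichain (· ≤ ·) (A : Set α) ∧ ∃ f : α → ℕ,
      (∀ x ∈ s, f x < A.card) ∧ ∀ x ∈ s, ∀ y ∈ s, f x = f y → x ≤ y ∨ y ≤ x := by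
  intro n
  induction n with
  | zero =>
    intro s hs
    have : s = ∅ := by simpa using hs
    subst this
    exact ⟨∅, by simp, by simp, fun _ => 0, by simp, by simp⟩
  | succ n ih =>
    intro s hs
    rcases s.eq_empty_or_nonempty with rfl | hne
    · exact ⟨∅, by simp, by simp, fun _ => 0, by simp, by simp⟩
    obtain ⟨a, ha, hmax⟩ : ∃ a ∈ s, ∀ b ∈ s, a ≤ b → b = a := by
      obtain ⟨a, ha⟩ := s.exists_maximal hne
      exact ⟨a, ha.1, fun b hb hab => le_antisymm (ha.2 hb hab) hab⟩
    have hcard : (s.erase a).card ≤ n := by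
      rw [Finset.card_erase_of_mem ha]; omega
    obtain ⟨A, hAs, hA, f, hf, hfc⟩ := ih (s.erase a) hcard
    -- every antichain of full size hits every colour class
    have hit : ∀ B : Finset α, B ⊆ s.erase a → IsAntichain (· ≤ ·) (B : Set α) →
        B.card = A.card → ∀ i < A.card, ∃ z ∈ B, f z = i := by
      intro B hB hBa hBc i hi
      have hinj : Set.InjOn f (B : Set α) := by
        intro u hu v hv huv
        by_contra hne'
        rcases hfc u (hB hu) v (hB hv) huv with h | h
        · exact hBa hu hv hne' h
        · exact hBa hv hu (Ne.symm hne') h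
      have := Finset.surjOn_of_injOn_of_card_le (s := B) (t := Finset.range A.card) f
        (fun u hu => by simpa using hf u (hB hu)) hinj (by simp [hBc])
      obtain ⟨z, hz, hzi⟩ := this (show i ∈ (Finset.range A.card : Set ℕ) by simpa using hi)
      exact ⟨z, hz, hzi⟩
    have hx : ∀ i, ∃ z, i < A.card → (z ∈ s.erase a ∧ f z = i ∧
        (∃ B : Finset α, B ⊆ s.erase a ∧ IsAntichain (· ≤ ·) (B : Set α) ∧ B.card = A.card ∧ z ∈ B) ∧
        ∀ B : Finset α, B ⊆ s.erase a → IsAntichain (· ≤ ·) (B : Set α) → B.card = A.card →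
          ∀ y ∈ B, f y = i → y ≤ z) := by
      intro i
      by_cases hi : i < A.card
      · classical
        let T := (s.erase a).filter (fun z => f z = i ∧ ∃ B : Finset α, B ⊆ s.erase a ∧
          IsAntichain (· ≤ ·) (B : Set α) ∧ B.card = A.card ∧ z ∈ B)
        have hT : T.Nonempty := by
          obtain ⟨z, hz, hzi⟩ := hit A hAs hA rfl i hi
          exact ⟨z, Finset.mem_filter.2 ⟨hAs hz, hzi, A, hAs, hA, rfl, hz⟩⟩
        obtain ⟨z, hz⟩ := T.exists_maximal hT
        have hz1 := Finset.mem_filter.1 hz.1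
        refine ⟨z, fun _ => ⟨hz1.1, hz1.2.1, hz1.2.2, ?_⟩⟩
        intro B hB hBa hBc y hy hyi
        rcases hfc y (hB hy) z hz1.1 (hyi.trans hz1.2.1.symm) with h | h
        · exact h
        · exact hz.2 (Finset.mem_filter.2 ⟨hB hy, hyi, B, hB, hBa, hBc, hy⟩) h
      · exact ⟨a, fun h => absurd h hi⟩
    choose z hz using hx
    have hzanti : ∀ i < A.card, ∀ j < A.card, i ≠ j → ¬ z i ≤ z j := by
      intro i hi j hj hij hle
      obtain ⟨-, hfj, ⟨B, hB, hBa, hBc, hzB⟩, -⟩ := hz j hj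
      obtain ⟨y, hy, hyi⟩ := hit B hB hBa hBc i hi
      have h1 := (hz i hi).2.2.2 B hB hBa hBc y hy hyi
      refine hBa hy hzB ?_ (h1.trans hle)
      rintro rfl
      exact hij (hyi.symm.trans hfj)
    have hzinj : Set.InjOn z (Finset.range A.card : Set ℕ) := by
      intro i hi j hj hij
      by_contra h
      exact hzanti i (by simpa using hi) j (by simpa using hj) h hij.le
    let Z := (Finset.range A.card).image z
    have hZc : Z.card = A.card := by
      rw [Finset.card_image_of_injOn hzinj, Finset.card_range]
    have hZs : Z ⊆ s.erase a := by
      intro u hu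
      obtain ⟨i, hi, rfl⟩ := Finset.mem_image.1 hu
      exact (hz i (by simpa using hi)).1
    have hZa : IsAntichain (· ≤ ·) (Z : Set α) := by
      intro u hu v hv huv
      obtain ⟨i, hi, rfl⟩ := Finset.mem_image.1 (Finset.mem_coe.1 hu)
      obtain ⟨j, hj, rfl⟩ := Finset.mem_image.1 (Finset.mem_coe.1 hv)
      exact hzanti i (by simpa using hi) j (by simpa using hj) (by rintro rfl; exact huv rfl)
    by_cases hc : ∃ i < A.card, z i ≤ a
    · obtain ⟨i, hi, hia⟩ := hc
      classical
      let K := s.filter (fun y => y = a ∨ (f y = i ∧ y ≤ z i))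
      have haK : a ∈ K := Finset.mem_filter.2 ⟨ha, Or.inl rfl⟩
      have hsub : s \ K ⊆ s.erase a := by
        intro u hu
        rw [Finset.mem_sdiff] at hu
        refine Finset.mem_erase.2 ⟨?_, hu.1⟩
        rintro rfl
        exact hu.2 haK
      obtain ⟨B, hBs, hB, g, hg, hgc⟩ := ih (s \ K) ((Finset.card_le_card hsub).trans hcard)
      have hlt : B.card < A.card := by
        by_contra hle
        obtain ⟨B', hB', hB'c⟩ := Finset.exists_subset_card_eq (not_lt.1 hle)
        have hB's := (hB'.trans hBs).trans hsub
        have hB'a : IsAntichain (· ≤ ·) (B' : Set α) := hB.subset (by exact_mod_cast hB')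
        obtain ⟨y, hy, hyi⟩ := hit B' hB's hB'a hB'c i hi
        have h1 := (hz i hi).2.2.2 B' hB's hB'a hB'c y hy hyi
        have h2 := Finset.mem_sdiff.1 (hBs (hB' hy))
        exact h2.2 (Finset.mem_filter.2 ⟨h2.1, Or.inr ⟨hyi, h1⟩⟩)
      refine ⟨A, hAs.trans (Finset.erase_subset _ _), hA,
        fun y => if y ∈ K then B.card else g y, ?_, ?_⟩
      · intro y hy
        by_cases hyK : y ∈ K
        · simpa [hyK] using hlt
        · simpa [hyK] using (hg y (Finset.mem_sdiff.2 ⟨hy, hyK⟩)).trans hlt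
      · intro u hu v hv huv
        by_cases huK : u ∈ K <;> by_cases hvK : v ∈ K <;> simp only [huK, hvK, if_true, if_false] at huv
        · rcases (Finset.mem_filter.1 huK).2 with rfl | ⟨h1, h2⟩ <;>
            rcases (Finset.mem_filter.1 hvK).2 with h3 | ⟨h3, h4⟩
          · exact Or.inl h3.ge
          · exact Or.inr (h4.trans hia)
          · subst h3; exact Or.inl (h2.trans hia)
          · by_cases hua : u = a
            · subst hua; exact Or.inr (h4.trans hia)
            by_cases hva : v = a
            · subst hva; exact Or.inl (h2.trans hia)
            exact hfc u (Finset.mem_erase.2 ⟨hua, hu⟩) v (Finset.mem_erase.2 ⟨hva, hv⟩) (h1.trans h3.symm)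
        · have := hg v (Finset.mem_sdiff.2 ⟨hv, hvK⟩); omega
        · have := hg u (Finset.mem_sdiff.2 ⟨hu, huK⟩); omega
        · exact hgc u (Finset.mem_sdiff.2 ⟨hu, huK⟩) v (Finset.mem_sdiff.2 ⟨hv, hvK⟩) huv
    · push Not at hc
      have haZ : a ∉ Z := fun h => by simpa using hZs h
      refine ⟨insert a Z, ?_, ?_, fun y => if y = a then A.card else f y, ?_, ?_⟩
      · intro u hu
        rcases Finset.mem_insert.1 hu with rfl | h
        · exact ha
        · exact Finset.mem_of_mem_erase (hZs h)
      · rw [Finset.coe_insert]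
        refine hZa.insert ?_ ?_
        · intro b hb _ hle
          obtain ⟨i, hi, rfl⟩ := Finset.mem_image.1 (Finset.mem_coe.1 hb)
          exact hc i (by simpa using hi) hle
        · intro b hb hne' hle
          exact hne' (hmax b (Finset.mem_of_mem_erase (hZs hb)) hle).symm
      · intro y hy
        rw [Finset.card_insert_of_notMem haZ, hZc]
        by_cases hya : y = a
        · simp [hya]
        · simpa [hya] using (hf y (Finset.mem_erase.2 ⟨hya, hy⟩)).trans (Nat.lt_succ_self _)
      · intro u hu v hv huv
        by_cases hua : u = a <;> by_cases hva : v = a <;> simp only [hua, hva, if_true, if_false] at huv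
        · exact Or.inl (by rw [hua, hva])
        · have := hf v (Finset.mem_erase.2 ⟨hva, hv⟩); omega
        · have := hf u (Finset.mem_erase.2 ⟨hua, hu⟩); omega
        · exact hfc u (Finset.mem_erase.2 ⟨hua, hu⟩) v (Finset.mem_erase.2 ⟨hva, hv⟩) huv

theorem dilworth_inf {α : Type*} [PartialOrder α] (r : ℕ)
    (h : ∀ A : Finset α, IsAntichain (· ≤ ·) (A : Set α) → A.card ≤ r) :
    ∃ χ : α → Fin (r + 1), ∀ x y, χ x = χ y → x ≤ y ∨ y ≤ x := by
  classical
  have key : ∀ s : Finset α, ∃ g : α → Fin (r + 1), ∀ x ∈ s, ∀ y ∈ s, g x = g y → x ≤ y ∨ y ≤ x := by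
    intro s
    obtain ⟨A, -, hA, f, hf, hfc⟩ := dilworth_fin s.card s le_rfl
    have hr := h A hA
    refine ⟨fun x => if hx : f x < r + 1 then ⟨f x, hx⟩ else 0, ?_⟩
    intro u hu v hv huv
    have h1 : f u < r + 1 := by have := hf u hu; omega
    have h2 : f v < r + 1 := by have := hf v hv; omega
    refine hfc u hu v hv ?_
    simpa [h1, h2] using huv
  choose g hg using key
  obtain ⟨χ, hχ⟩ := Finset.rado_selection (β := fun _ : α => Fin (r + 1)) g
  refine ⟨χ, fun u v huv => ?_⟩
  obtain ⟨t, hst, ht⟩ := hχ {u, v}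
  have h1 := ht u (by simp)
  have h2 := ht v (by simp)
  exact hg t u (hst (by simp)) v (hst (by simp)) (by rw [← h1, ← h2, huv])


theorem exists_divChain_of_unbounded {X : Type u} [MetricSpace X] (x : X) (C : Set (Set X))
    (hh : ∀ h ∈ C, IsHalfspace h) (hne : ∀ h ∈ C, h.Nonempty) (hC : IsChain (· ⊆ ·) C)
    (hub : ∀ M : ℝ, ∃ h ∈ C, M < infDist x h) :
    ∃ c : ℕ → Set X, DivChain x c ∧ ∀ n, c n ∈ C := by
  choose F hFC hF using hub
  let c : ℕ → Set X := fun n => Nat.rec (F 0) (fun n p => F (max (n + 1 : ℝ) (infDist x p))) n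
  have hcs : ∀ n, c (n + 1) = F (max (n + 1 : ℝ) (infDist x (c n))) := fun n => rfl
  have hcC : ∀ n, c n ∈ C := by
    intro n
    cases n with
    | zero => exact hFC _
    | succ n => rw [hcs]; exact hFC _
  refine ⟨c, ⟨fun n => hh _ (hcC n), ?_, ?_⟩, hcC⟩
  · intro n
    rcases hC.total (hcC (n + 1)) (hcC n) with h | h
    · exact h
    · exfalso
      have h1 := infDist_le_infDist_of_subset h (hne _ (hcC n)) (x := x)
      have h2 := hF (max (n + 1 : ℝ) (infDist x (c n)))
      rw [← hcs] at h2
      have := lt_of_le_of_lt (le_max_right _ _) h2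
      linarith
  · refine tendsto_atTop_mono ?_ tendsto_natCast_atTop_atTop
    intro n
    cases n with
    | zero => simpa using infDist_nonneg
    | succ n =>
      have h2 := hF (max (n + 1 : ℝ) (infDist x (c n)))
      rw [← hcs] at h2
      have := lt_of_le_of_lt (le_max_left _ _) h2
      push_cast
      exact this.le

theorem antichain_card_le {X : Type u} [MetricSpace X] {r : ℕ} (hr : RankLE X r)
    (x : X) (σ : Set (Set X)) (hσ : UltrafilterOn X σ) (Ω : Set (Set X)) (hΩ : Ω ⊆ σ \ sigmaPt x)
    (A : Finset Ω) (hA : IsAntichain (· ≤ ·) (A : Set Ω)) : A.card ≤ r := by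
  classical
  have hx : ∀ h ∈ Ω, x ∉ h := fun h hh hx => (hΩ hh).2 ⟨hσ.1 h (hΩ hh).1, hx⟩
  let w : Ω → Set (Set X) := fun h => {h.1, h.1ᶜ}
  have hw : Function.Injective w := by
    intro h k hk
    have h1 : h.1 ∈ w k := by rw [← hk]; exact Or.inl rfl
    rcases h1 with h1 | h1
    · exact Subtype.ext h1
    · exfalso
      have h2 : h.1 = k.1ᶜ := h1
      obtain ⟨y, hy1, hy2⟩ := hσ.2.1 _ (hΩ h.2).1 _ (hΩ k.2).1
      rw [h2] at hy1
      exact hy1 hy2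
  rw [← Finset.card_image_of_injective A hw]
  apply hr
  · intro v hv
    obtain ⟨h, -, rfl⟩ := Finset.mem_image.1 hv
    exact ⟨h.1, hσ.1 _ (hΩ h.2).1, rfl⟩
  · intro v hv v' hv' hvv
    obtain ⟨h, hh, rfl⟩ := Finset.mem_image.1 (Finset.mem_coe.1 hv)
    obtain ⟨k, hk, rfl⟩ := Finset.mem_image.1 (Finset.mem_coe.1 hv')
    have hne : h ≠ k := by rintro rfl; exact hvv rfl
    have n1 : ¬ h.1 ⊆ k.1 := hA hh hk hne
    have n2 : ¬ k.1 ⊆ h.1 := hA hk hh hne.symm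
    refine ⟨h.1, Or.inl rfl, k.1, Or.inl rfl, hσ.2.1 _ (hΩ h.2).1 _ (hΩ k.2).1, ?_, ?_,
      ⟨x, hx _ h.2, hx _ k.2⟩⟩
    · obtain ⟨y, hy1, hy2⟩ := Set.not_subset.1 n1
      exact ⟨y, hy1, hy2⟩
    · obtain ⟨y, hy1, hy2⟩ := Set.not_subset.1 n2
      exact ⟨y, hy2, hy1⟩

theorem stronglyReduced_of_fintype {X : Type u} [MetricSpace X] (x : X) (Ω : Set (Set X))
    {ι : Type} [Fintype ι] [Nonempty ι] (C : ι → Set (Set X))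
    (hd : ∀ i j, i ≠ j → Disjoint (C i) (C j)) (hU : (⋃ i, C i) = Ω)
    (hC : ∀ i, IsChain (· ⊆ ·) (C i) ∧ ∃ c : ℕ → Set X, DivChain x c ∧ ∀ n, c n ∈ C i) :
    StronglyReducedUBS x Ω := by
  let e := Fintype.equivFin ι
  refine ⟨Fintype.card ι, fun i => C (e.symm i), Fintype.card_pos, ?_, ?_, fun i => hC _⟩
  · intro i _ j _ hij
    exact hd _ _ (fun h => hij (e.symm.injective h))
  · rw [← hU]
    exact e.symm.surjective.iUnion_comp C

/-- Let `X` be a complete, finite-rank median space, `x ∈ X`,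
`σ` an ultrafilter on the halfspaces, and `Ω ⊆ σ \ σ_x` a minimal UBS.  Then
(a) there is a strongly reduced UBS contained in `Ω` all of whose sub-UBS's are
strongly reduced; and (b) if `Ω` is strongly reduced, then it is reduced. -/
theorem strongly_reduced_sub_UBS_exists_and_strongly_reduced_is_reduced
    {X : Type u} [MetricSpace X] [CompleteSpace X]
    (hX : IsMedianSpace X) (hfr : HasFiniteRank X)
    (x : X) (σ : Set (Set X)) (hσ : UltrafilterOn X σ)
    (Ω : Set (Set X)) (hΩ : MinimalUBS x σ Ω) :
    (∃ Ω₀ : Set (Set X), Ω₀ ⊆ Ω ∧ IsUBS x σ Ω₀ ∧ StronglyReducedUBS x Ω₀ ∧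
      ∀ Ω₁ : Set (Set X), Ω₁ ⊆ Ω₀ → IsUBS x σ Ω₁ → StronglyReducedUBS x Ω₁) ∧
    (StronglyReducedUBS x Ω → ReducedUBS x Ω) := by
  obtain ⟨r, hr⟩ := hfr
  obtain ⟨⟨hΩσ, hΩi, hΩc⟩, hmin⟩ := hΩ
  have hhalf : ∀ h ∈ Ω, IsHalfspace h := fun h hh => hσ.1 h (hΩσ hh).1
  have hnon : ∀ h ∈ Ω, h.Nonempty := fun h hh => by
    simpa using hσ.2.1 h (hΩσ hh).1 h (hΩσ hh).1
  constructor
  · obtain ⟨χ, hχ⟩ := dilworth_inf (α := Ω) r (antichain_card_le hr x σ hσ Ω hΩσ)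
    let D : Fin (r + 1) → Set (Set X) := fun i => {h | ∃ hh : h ∈ Ω, χ ⟨h, hh⟩ = i}
    have hDΩ : ∀ i, D i ⊆ Ω := fun i h hh => hh.1
    have hDc : ∀ i, IsChain (· ⊆ ·) (D i) := by
      rintro i h ⟨hh, h1⟩ k ⟨hk, h2⟩ -
      exact hχ ⟨h, hh⟩ ⟨k, hk⟩ (h1.trans h2.symm)
    have hDd : ∀ i j, i ≠ j → Disjoint (D i) (D j) := by
      intro i j hij
      rw [Set.disjoint_left]
      rintro h ⟨hh, h1⟩ ⟨_, h2⟩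
      exact hij (h1.symm.trans h2)
    have hb : ∀ i, ∃ M : ℝ, (∃ h ∈ D i, M < infDist x h) → ∀ M' : ℝ, ∃ h ∈ D i, M' < infDist x h := by
      intro i
      by_cases H : ∀ M' : ℝ, ∃ h ∈ D i, M' < infDist x h
      · exact ⟨0, fun _ => H⟩
      · obtain ⟨M, hM⟩ := not_forall.1 H
        exact ⟨M, fun h => absurd h hM⟩
    choose M hM using hb
    obtain ⟨N, hN⟩ : ∃ N : ℝ, ∀ i, M i ≤ N :=
      ⟨∑ i, |M i|, fun i => (le_abs_self _).trans
        (Finset.single_le_sum (f := fun i => |M i|) (fun _ _ => abs_nonneg _) (Finset.mem_univ i))⟩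
    have main : ∀ Ω₁ : Set (Set X), Ω₁ ⊆ {h ∈ Ω | N < infDist x h} → IsUBS x σ Ω₁ →
        StronglyReducedUBS x Ω₁ := by
      intro Ω₁ h1 hU
      obtain ⟨L, hL⟩ := hmin Ω₁ hU ⟨0, fun h hh => absurd (h1 hh.1).1 hh.2⟩
      let ι := {i : Fin (r + 1) // ∃ h ∈ D i, N < infDist x h}
      have : Fintype ι := Fintype.ofFinite ι
      have hcov : ∀ h ∈ Ω₁, ∃ i : ι, h ∈ D i.1 := fun h hh =>
        ⟨⟨χ ⟨h, (h1 hh).1⟩, h, ⟨(h1 hh).1, rfl⟩, (h1 hh).2⟩, (h1 hh).1, rfl⟩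
      have : Nonempty ι := by
        obtain ⟨c, -, hc⟩ := hU.2.2
        exact ⟨(hcov _ (hc 0)).choose⟩
      refine stronglyReduced_of_fintype x Ω₁ (fun i : ι => D i.1 ∩ Ω₁) ?_ ?_ ?_
      · intro i j hij
        exact (hDd i.1 j.1 (fun h => hij (Subtype.ext h))).mono inter_subset_left inter_subset_left
      · ext h
        simp only [mem_iUnion, mem_inter_iff]
        exact ⟨fun ⟨_, _, h⟩ => h, fun hh => ⟨_, (hcov h hh).choose_spec, hh⟩⟩
      · intro i
        have hch : IsChain (· ⊆ ·) (D i.1 ∩ Ω₁) := (hDc i.1).mono inter_subset_left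
        refine ⟨hch, ?_⟩
        refine exists_divChain_of_unbounded x _ (fun h hh => hhalf h (hDΩ _ hh.1))
          (fun h hh => hnon h (hDΩ _ hh.1)) hch ?_
        intro M'
        obtain ⟨k, hk, hkN⟩ := i.2
        obtain ⟨h, hh, hlt⟩ := hM i.1 ⟨k, hk, (hN i.1).trans_lt hkN⟩ (max M' L)
        refine ⟨h, ⟨hh, ?_⟩, (le_max_left _ _).trans_lt hlt⟩
        by_contra hn
        have := hL h ⟨hDΩ _ hh, hn⟩
        exact absurd ((le_max_right _ _).trans_lt hlt) (not_lt.2 this)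
    have hU0 : IsUBS x σ {h ∈ Ω | N < infDist x h} := by
      refine ⟨fun h hh => hΩσ hh.1, ?_, ?_⟩
      · intro j hj h hh k hk hhj hjk
        refine ⟨hΩi j hj h hh.1 k hk.1 hhj hjk, hk.2.trans_le ?_⟩
        exact infDist_le_infDist_of_subset hjk ((hnon h hh.1).mono hhj)
      · obtain ⟨c, ⟨hc1, hc2, hc3⟩, hc⟩ := hΩc
        obtain ⟨m, hm⟩ := eventually_atTop.1 (hc3.eventually_gt_atTop N)
        refine ⟨fun n => c (n + m), ⟨fun n => hc1 _, fun n => ?_, ?_⟩, fun n => ⟨hc _, hm _ (by omega)⟩⟩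
        · have := hc2 (n + m)
          rwa [show n + m + 1 = n + 1 + m by omega] at this
        · exact hc3.comp (tendsto_add_atTop_nat m)
    exact ⟨_, fun h hh => hh.1, hU0, main _ subset_rfl hU0, main⟩
  · rintro ⟨m, C, -, -, hCU, hC⟩ k hk ⟨h, ⟨hh1, hh2, hh3⟩, hhΩ, hT⟩
    let H : Set (Set X) := {j | IsHalfspace j ∧ ∃ a b, h a ⊆ j ∧ j ⊆ h b}
    have hHΩ : H ⊆ Ω := by
      rintro j ⟨hj, a, b, h1, h2⟩
      exact hΩi j hj _ (hhΩ a) _ (hhΩ b) h1 h2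
    have hHU : IsUBS x σ H := by
      refine ⟨hHΩ.trans hΩσ, ?_, h, ⟨hh1, hh2, hh3⟩, fun n => ⟨hh1 n, n, n, subset_rfl, subset_rfl⟩⟩
      rintro j hj p ⟨-, a, -, ha, -⟩ q ⟨-, -, b, -, hb⟩ hpj hjq
      exact ⟨hj, a, b, ha.trans hpj, hjq.trans hb⟩
    obtain ⟨L, hL⟩ := hmin H hHU ⟨0, fun p hp => absurd (hHΩ hp.1) hp.2⟩
    have hk' : k ∈ ⋃ i, C i := hCU ▸ hk
    obtain ⟨i, hi⟩ := mem_iUnion.1 hk'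
    obtain ⟨hch, c, ⟨-, -, hc3⟩, hc⟩ := hC i
    have hcΩ : ∀ n, c n ∈ Ω := fun n => hCU ▸ mem_iUnion.2 ⟨i, hc n⟩
    obtain ⟨n, hn⟩ := (hc3.eventually_gt_atTop (max L (infDist x k))).exists
    have hcH : c n ∈ H := by
      by_contra hnot
      exact absurd ((le_max_left _ _).trans_lt hn) (not_lt.2 (hL _ ⟨hcΩ n, hnot⟩))
    have hck : c n ⊆ k := by
      rcases hch.total (hc n) hi with h1 | h1
      · exact h1
      · exact absurd ((le_max_right _ _).trans_lt hn)
          (not_lt.2 (infDist_le_infDist_of_subset h1 (hnon k hk)))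
    obtain ⟨-, a, -, ha, -⟩ := hcH
    obtain ⟨y, hy1, hy2⟩ := (hT a).2.2.1
    exact hy1 (hck (ha hy2))
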